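/- arXiv:1608.02393 — 5 statements merged into one kernel-verified Lean document; each statement's English description precedes it below -/
import Mathlib

section
/- (Koebe theorem in metric spaces) Let X and Y be metric spaces satisfying assumptions (A), let Ω ⊊ X be a bounded domain satisfying the bounded turning condition, let D ⊊ Y be a bounded domain that is finitely connected at the boundary, and let f ∈ F(Ω, D). Then f has arcwise limits along all end-cuts of Ω: for every x ∈ ∂Ω and every end-cut γ : [0,1] → X of Ω from x, there exists x' ∈ ∂D such that f(γ(t)) → x' in Y as t → 1⁻. -/
open Set Metric Filter Bornology
open scoped ENNReal Topology

noncomputable section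

/-- A metric space is doubling if there is `N` such that every ball of radius `r`
can be covered by at most `N` balls of radius `r/2`. -/
def DoublingSpace (X : Type*) [MetricSpace X] : Prop :=
  ∃ N : ℕ, ∀ (x : X) (r : ℝ), ∃ t : Finset X,
    t.card ≤ N ∧ Metric.ball x r ⊆ ⋃ y ∈ t, Metric.ball y (r / 2)

/-- A metric space is quasiconvex if there is `C ≥ 1` such that any two points are
joined by a rectifiable curve of length at most `C · d(x,y)`. -/
def QuasiconvexSpace (X : Type*) [MetricSpace X] : Prop :=
  ∃ C : ℝ, 1 ≤ C ∧ ∀ x y : X, ∃ γ : ℝ → X,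
    ContinuousOn γ (Set.Icc 0 1) ∧ γ 0 = x ∧ γ 1 = y ∧
    eVariationOn γ (Set.Icc 0 1) ≤ ENNReal.ofReal (C * dist x y)

/-- Assumptions (A): complete, doubling and quasiconvex. -/
def AssumptionsA (X : Type*) [MetricSpace X] : Prop :=
  CompleteSpace X ∧ DoublingSpace X ∧ QuasiconvexSpace X

/-- A domain: a nonempty open connected subset. -/
def IsDomainIn {X : Type*} [MetricSpace X] (Ω : Set X) : Prop :=
  IsOpen Ω ∧ IsConnected Ω

/-- The inner diameter distance `dist_{M'}` between `E, F ⊆ Ω`: the infimum of diameters of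
rectifiable curves in `Ω` joining `E` and `F` (the infimum of the empty set being `∞`). -/
def innerDiamDist {X : Type*} [MetricSpace X] (Ω E F : Set X) : ℝ≥0∞ :=
  ⨅ (γ : ℝ → X) (_ : ContinuousOn γ (Set.Icc 0 1) ∧ γ '' Set.Icc 0 1 ⊆ Ω ∧
      eVariationOn γ (Set.Icc 0 1) < ⊤ ∧ γ 0 ∈ E ∧ γ 1 ∈ F),
    EMetric.diam (γ '' Set.Icc 0 1)

/-- The Mazurkiewicz distance `dist_M` between `A, B ⊆ Ω`: the infimum of diameters of
connected subsets of `Ω` meeting both `A` and `B`. -/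
def mazDist {X : Type*} [MetricSpace X] (Ω A B : Set X) : ℝ≥0∞ :=
  ⨅ (K : Set X) (_ : K ⊆ Ω ∧ IsConnected K ∧ (K ∩ A).Nonempty ∧ (K ∩ B).Nonempty),
    EMetric.diam K

/-- An acceptable set in a bounded domain `Ω`: a bounded connected proper subset of `Ω`
whose closure meets `∂Ω`. -/
def AcceptableIn {X : Type*} [MetricSpace X] (Ω E : Set X) : Prop :=
  Bornology.IsBounded E ∧ IsConnected E ∧ E ⊆ Ω ∧ E ≠ Ω ∧
    (closure E ∩ frontier Ω).Nonempty

/-- A chain in `Ω`. -/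
def IsChainIn {X : Type*} [MetricSpace X] (Ω : Set X) (E : ℕ → Set X) : Prop :=
  (∀ k, AcceptableIn Ω (E k)) ∧
  (∀ k, E (k + 1) ⊆ E k) ∧
  (∀ k, 0 < mazDist Ω (Ω ∩ frontier (E (k + 1))) (Ω ∩ frontier (E k))) ∧
  (⋂ k, closure (E k)) ⊆ frontier Ω

/-- The impression of a chain. -/
def impression {X : Type*} [MetricSpace X] (E : ℕ → Set X) : Set X :=
  ⋂ k, closure (E k)

/-- A chain `E` divides a chain `F` if every member of `F` contains some member of `E`. -/
def ChainDivides {X : Type*} (E F : ℕ → Set X) : Prop :=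
  ∀ k, ∃ l, E l ⊆ F k

/-- Two chains are equivalent if they divide each other. -/
def ChainEquiv {X : Type*} (E F : ℕ → Set X) : Prop :=
  ChainDivides E F ∧ ChainDivides F E

/-- A chain represents a prime end if every chain dividing it is equivalent to it. -/
def IsPrimeChain {X : Type*} [MetricSpace X] (Ω : Set X) (E : ℕ → Set X) : Prop :=
  IsChainIn Ω E ∧ ∀ F : ℕ → Set X, IsChainIn Ω F → ChainDivides F E → ChainDivides E F

/-- A chain represents a singleton prime end if moreover its impression is a single point. -/
def IsSingletonPrimeChain {X : Type*} [MetricSpace X] (Ω : Set X) (E : ℕ → Set X) : Prop :=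
  IsPrimeChain Ω E ∧ ∃ x : X, impression E = {x}

/-- The bounded turning condition (linear connectedness): any two distinct points of `Ω` lie in a
continuum contained in `Ω` of diameter at most `L` times their distance. -/
def BoundedTurning {X : Type*} [MetricSpace X] (Ω : Set X) : Prop :=
  ∃ L : ℝ, 1 ≤ L ∧ ∀ x ∈ Ω, ∀ y ∈ Ω, x ≠ y → ∃ K : Set X,
    K ⊆ Ω ∧ IsCompact K ∧ IsConnected K ∧ K.Nontrivial ∧ x ∈ K ∧ y ∈ K ∧
    Metric.diam K ≤ L * dist x y

/-- `Ω` is finitely connected at a boundary point `x`. -/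
def FinitelyConnectedAt {X : Type*} [MetricSpace X] (Ω : Set X) (x : X) : Prop :=
  ∀ r : ℝ, 0 < r → ∃ U : Set X, IsOpen U ∧ Bornology.IsBounded U ∧ x ∈ U ∧
    U ⊆ Metric.ball x r ∧
    {C : Set X | ∃ y ∈ U ∩ Ω, C = connectedComponentIn (U ∩ Ω) y}.Finite

/-- `Ω` is finitely connected at the boundary. -/
def FinitelyConnectedAtBoundary {X : Type*} [MetricSpace X] (Ω : Set X) : Prop :=
  ∀ x ∈ frontier Ω, FinitelyConnectedAt Ω x

/-- `Ω` is locally connected at a boundary point `x`. -/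
def LocallyConnectedAt {X : Type*} [MetricSpace X] (Ω : Set X) (x : X) : Prop :=
  ∀ r : ℝ, 0 < r → ∃ U : Set X, IsOpen U ∧ Bornology.IsBounded U ∧ x ∈ U ∧
    U ⊆ Metric.ball x r ∧ IsConnected (U ∩ Ω)

/-- `Ω` is locally connected at the boundary. -/
def LocallyConnectedAtBoundary {X : Type*} [MetricSpace X] (Ω : Set X) : Prop :=
  ∀ x ∈ frontier Ω, LocallyConnectedAt Ω x

/-- `f` is a homeomorphism of `Ω` onto `Ω'` with inverse `g`. -/
def IsHomeoBetween {X Y : Type*} [MetricSpace X] [MetricSpace Y] (f : X → Y) (g : Y → X)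
    (Ω : Set X) (Ω' : Set Y) : Prop :=
  ContinuousOn f Ω ∧ ContinuousOn g Ω' ∧ Set.MapsTo f Ω Ω' ∧ Set.MapsTo g Ω' Ω ∧
  (∀ x ∈ Ω, g (f x) = x) ∧ (∀ y ∈ Ω', f (g y) = y)

/-- The class `F(Ω, Ω')`: homeomorphisms such that for all connected `E, F ⊊ Ω`,
`dist_{M'}(E,F) = 0` iff `dist_{M'}(f(E), f(F)) = 0`. -/
def ClassF {X Y : Type*} [MetricSpace X] [MetricSpace Y] (Ω : Set X) (Ω' : Set Y)
    (f : X → Y) (g : Y → X) : Prop :=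
  IsHomeoBetween f g Ω Ω' ∧
  ∀ E F : Set X, E ⊆ Ω → E ≠ Ω → IsConnected E → F ⊆ Ω → F ≠ Ω → IsConnected F →
    (innerDiamDist Ω E F = 0 ↔ innerDiamDist Ω' (f '' E) (f '' F) = 0)

/-- The cluster set `C(f, x)` of `f : Ω → Y` at `x`. -/
def clusterSetOn {X Y : Type*} [MetricSpace X] [MetricSpace Y] (f : X → Y) (Ω : Set X)
    (x : X) : Set Y :=
  ⋂ U ∈ 𝓝 x, closure (f '' (U ∩ Ω))


def RCurve {X : Type*} [MetricSpace X] (V : Set X) (a b : X) : Prop :=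
  ∃ γ : ℝ → X, ContinuousOn γ (Set.Icc 0 1) ∧ γ '' Set.Icc 0 1 ⊆ V ∧
      eVariationOn γ (Set.Icc 0 1) < ⊤ ∧ γ 0 = a ∧ γ 1 = b

theorem RCurve.symm {X : Type*} [MetricSpace X] {V : Set X} {a b : X} (h : RCurve V a b) :
    RCurve V b a := by
  obtain ⟨γ, hc, hV, hv, h0, h1⟩ := h
  have hm : MapsTo (fun t : ℝ => 1 - t) (Icc 0 1) (Icc 0 1) := by
    intro t ht
    exact ⟨by linarith [ht.2], by linarith [ht.1]⟩
  refine ⟨γ ∘ fun t => 1 - t, hc.comp (by fun_prop) hm, ?_, ?_, by simpa using h1,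
    by simpa using h0⟩
  · rintro _ ⟨t, ht, rfl⟩
    exact hV ⟨1 - t, hm ht, rfl⟩
  · refine lt_of_le_of_lt (eVariationOn.comp_le_of_antitoneOn γ _ ?_ hm) hv
    intro s _ t _ hst
    show 1 - t ≤ 1 - s
    linarith

theorem RCurve.trans {X : Type*} [MetricSpace X] {V : Set X} {a b c : X} (h : RCurve V a b)
    (h' : RCurve V b c) : RCurve V a c := by
  obtain ⟨γ, hc, hV, hv, h0, h1⟩ := h
  obtain ⟨η, kc, kV, kv, k0, k1⟩ := h'
  let σ : ℝ → X := fun t => if t ≤ 1 / 2 then γ (2 * t) else η (2 * t - 1)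
  have e1 : EqOn σ (γ ∘ fun t => 2 * t) (Icc 0 (1 / 2)) := by
    intro t ht
    simp only [σ, if_pos ht.2, Function.comp]
  have e2 : EqOn σ (η ∘ fun t => 2 * t - 1) (Icc (1 / 2) 1) := by
    intro t ht
    by_cases hh : t ≤ 1 / 2
    · have : t = 1 / 2 := le_antisymm hh ht.1
      subst this
      simp [σ, h1, k0]
    · simp only [σ, if_neg hh, Function.comp]
  have m1 : MapsTo (fun t : ℝ => 2 * t) (Icc 0 (1 / 2)) (Icc 0 1) := by
    intro t ht
    exact ⟨by linarith [ht.1], by linarith [ht.2]⟩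
  have m2 : MapsTo (fun t : ℝ => 2 * t - 1) (Icc (1 / 2) 1) (Icc 0 1) := by
    intro t ht
    exact ⟨by linarith [ht.1], by linarith [ht.2]⟩
  have hu : Icc (0 : ℝ) 1 = Icc 0 (1 / 2) ∪ Icc (1 / 2) 1 :=
    (Icc_union_Icc_eq_Icc (by norm_num) (by norm_num)).symm
  have c1 : ContinuousOn σ (Icc 0 (1 / 2)) :=
    (hc.comp (by fun_prop) m1).congr e1
  have c2 : ContinuousOn σ (Icc (1 / 2) 1) :=
    (kc.comp (by fun_prop) m2).congr e2
  refine ⟨σ, ?_, ?_, ?_, ?_, ?_⟩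
  · rw [hu]
    exact c1.union_of_isClosed c2 isClosed_Icc isClosed_Icc
  · rintro _ ⟨t, ht, rfl⟩
    rw [hu] at ht
    rcases ht with ht | ht
    · rw [e1 ht]; exact hV ⟨_, m1 ht, rfl⟩
    · rw [e2 ht]; exact kV ⟨_, m2 ht, rfl⟩
  · rw [hu, eVariationOn.union σ (x := 1 / 2) (isGreatest_Icc (by norm_num))
      (isLeast_Icc (by norm_num)), eVariationOn.congr e1, eVariationOn.congr e2]
    refine ENNReal.add_lt_top.2 ⟨?_, ?_⟩
    · refine lt_of_le_of_lt (eVariationOn.comp_le_of_monotoneOn γ _ ?_ m1) hv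
      intro s _ t _ hst
      simpa using hst
    · refine lt_of_le_of_lt (eVariationOn.comp_le_of_monotoneOn η _ ?_ m2) kv
      intro s _ t _ hst
      simpa using hst
  · simp [σ, h0]
  · have : ¬ ((1 : ℝ) ≤ 1 / 2) := by norm_num
    simp only [σ, if_neg this]
    rw [← k1]; norm_num

theorem rcurve_thick {X : Type*} [MetricSpace X] (hX : QuasiconvexSpace X) {K : Set X}
    (hK : IsPreconnected K) {δ : ℝ} (hδ : 0 < δ) {a b : X} (ha : a ∈ K) (hb : b ∈ K) :
    RCurve (Metric.thickening δ K) a b := by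
  obtain ⟨C, hC, hq⟩ := hX
  refine hK.induction₂ (RCurve (Metric.thickening δ K)) ?_
    (fun _ _ _ _ _ _ h h' => h.trans h') (fun _ _ _ _ h => h.symm) ha hb
  intro p hp
  have hC0 : 0 < C := by linarith
  have : ∀ᶠ q in 𝓝[K] p, dist q p < δ / C :=
    mem_nhdsWithin_of_mem_nhds (Metric.ball_mem_nhds p (by positivity))
  filter_upwards [this] with q hqp
  obtain ⟨γ, hc, h0, h1, hv⟩ := hq p q
  refine ⟨γ, hc, ?_, lt_of_le_of_lt hv ENNReal.ofReal_lt_top, h0, h1⟩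
  rintro _ ⟨t, ht, rfl⟩
  rw [Metric.mem_thickening_iff]
  refine ⟨p, hp, ?_⟩
  have h2 := (eVariationOn.edist_le γ ht (left_mem_Icc.2 zero_le_one)).trans hv
  rw [edist_dist, h0, ENNReal.ofReal_le_ofReal_iff (by positivity)] at h2
  rw [dist_comm, lt_div_iff₀ hC0] at hqp
  nlinarith

theorem doubling_totallyBounded {Y : Type*} [MetricSpace Y] (hY : DoublingSpace Y) {D : Set Y}
    (hD : Bornology.IsBounded D) : TotallyBounded D := by
  obtain ⟨N, hN⟩ := hY
  rcases D.eq_empty_or_nonempty with rfl | ⟨p, hp⟩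
  · exact totallyBounded_empty
  obtain ⟨R, hR⟩ := hD.subset_ball p
  have key : ∀ n : ℕ, ∃ t : Set Y, t.Finite ∧ D ⊆ ⋃ y ∈ t, Metric.ball y (R / 2 ^ n) := by
    intro n
    induction n with
    | zero => exact ⟨{p}, finite_singleton p, by simpa using hR⟩
    | succ n ih =>
      obtain ⟨t, ht, hDt⟩ := ih
      choose u _ hu using fun y => hN y (R / 2 ^ n)
      refine ⟨⋃ y ∈ t, (u y : Set Y), ht.biUnion fun y _ => (u y).finite_toSet, ?_⟩
      intro z hz
      obtain ⟨y, hy, hzy⟩ := mem_iUnion₂.1 (hDt hz)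
      obtain ⟨w, hw, hzw⟩ := mem_iUnion₂.1 (hu y hzy)
      refine mem_iUnion₂.2 ⟨w, mem_iUnion₂.2 ⟨y, hy, hw⟩, ?_⟩
      rwa [pow_succ, ← div_div]
  rw [Metric.totallyBounded_iff]
  intro ε hε
  have hlim : Tendsto (fun n : ℕ => R * (1 / 2 : ℝ) ^ n) atTop (𝓝 (R * 0)) :=
    (tendsto_pow_atTop_nhds_zero_of_lt_one (by norm_num) (by norm_num)).const_mul R
  rw [mul_zero] at hlim
  obtain ⟨n, hn⟩ := (hlim.eventually_lt_const hε).exists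
  obtain ⟨t, ht, hDt⟩ := key n
  refine ⟨t, ht, hDt.trans (iUnion₂_mono fun y _ => Metric.ball_subset_ball ?_)⟩
  rw [one_div, inv_pow, ← div_eq_mul_inv] at hn
  exact hn.le

theorem innerDiamDist_zero {X : Type*} [MetricSpace X] (hX : QuasiconvexSpace X) {Ω : Set X}
    (hΩ : IsOpen Ω) (hbt : BoundedTurning Ω) {E F : Set X} (hE : E ⊆ Ω) (hF : F ⊆ Ω)
    (hEF : Disjoint E F) (x : X) (hxE : ∀ ε > 0, ∃ z ∈ E, dist z x < ε)
    (hxF : ∀ ε > 0, ∃ z ∈ F, dist z x < ε) : innerDiamDist Ω E F = 0 := by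
  obtain ⟨L, hL, hK⟩ := hbt
  have key : ∀ ε > 0, innerDiamDist Ω E F ≤ ENNReal.ofReal ε := by
    intro ε hε
    obtain ⟨a, ha, hax⟩ := hxE (ε / (8 * L)) (by positivity)
    obtain ⟨b, hb, hbx⟩ := hxF (ε / (8 * L)) (by positivity)
    obtain ⟨K, hKΩ, hKc, hKcon, -, haK, hbK, hdiam⟩ := hK a (hE ha) b (hF hb)
      (fun h => Set.disjoint_left.1 hEF ha (h ▸ hb))
    obtain ⟨δ₀, hδ₀, hth⟩ := hKc.exists_thickening_subset_open hΩ hKΩ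
    have hab : L * dist a b ≤ ε / 4 := by
      have h1 : dist a b ≤ ε / (8 * L) + ε / (8 * L) := by
        linarith [dist_triangle_right a b x]
      calc L * dist a b ≤ L * (ε / (8 * L) + ε / (8 * L)) := by gcongr
        _ = ε / 4 := by field_simp; norm_num
    obtain ⟨γ, hc, hV, hv, h0, h1⟩ := rcurve_thick hX hKcon.isPreconnected
      (δ := min δ₀ (ε / 4)) (lt_min hδ₀ (by positivity)) haK hbK
    have hsub := hV.trans (Metric.thickening_mono (min_le_left _ _) K)
    refine (iInf₂_le γ ⟨hc, hsub.trans hth, hv, h0 ▸ ha, h1 ▸ hb⟩).trans ?_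
    refine Metric.ediam_le_of_forall_dist_le ?_
    have hp : ∀ p ∈ γ '' Icc 0 1, dist p a ≤ ε / 2 := by
      intro p hp
      obtain ⟨z, hz, hpz⟩ := Metric.mem_thickening_iff.1 (hV hp)
      have := Metric.dist_le_diam_of_mem hKc.isBounded hz haK
      have := min_le_right δ₀ (ε / 4)
      linarith [dist_triangle p z a]
    intro p hp' q hq'
    linarith [dist_triangle_right p q a, hp p hp', hp q hq']
  by_contra hne
  have hpos : 0 < innerDiamDist Ω E F := pos_iff_ne_zero.2 hne
  obtain ⟨r, hr0, hr⟩ := ENNReal.lt_iff_exists_nnreal_btwn.1 hpos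
  have := key r (by exact_mod_cast hr0)
  rw [ENNReal.ofReal_coe_nnreal] at this
  exact absurd hr (not_lt.2 this)

theorem innerDiamDist_pos {Y : Type*} [MetricSpace Y] {D A B : Set Y} {ρ : ℝ} (hρ : 0 < ρ)
    (h : ∀ a ∈ A, ∀ b ∈ B, ρ ≤ dist a b) : innerDiamDist D A B ≠ 0 := by
  have : ENNReal.ofReal ρ ≤ innerDiamDist D A B := by
    refine le_iInf₂ ?_
    rintro γ ⟨-, -, -, h0, h1⟩
    refine le_trans ?_ (Metric.edist_le_ediam_of_mem (mem_image_of_mem γ (left_mem_Icc.2 zero_le_one))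
      (mem_image_of_mem γ (right_mem_Icc.2 zero_le_one)))
    rw [edist_dist]
    exact ENNReal.ofReal_le_ofReal (h _ h0 _ h1)
  exact ((ENNReal.ofReal_pos.2 hρ).trans_le this).ne'

/-- Koebe theorem in metric spaces: a map `f ∈ F(Ω, D)` between a bounded
turning domain `Ω` and a domain `D` finitely connected at the boundary has arcwise limits
along all end-cuts of `Ω`. -/
theorem statement_11 {X Y : Type*} [MetricSpace X] [MetricSpace Y]
    (hX : AssumptionsA X) (hY : AssumptionsA Y)
    (Ω : Set X) (hΩdom : IsDomainIn Ω) (hΩbdd : Bornology.IsBounded Ω)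
    (hΩne : Ω ≠ Set.univ) (hΩbt : BoundedTurning Ω)
    (D : Set Y) (hDdom : IsDomainIn D) (hDbdd : Bornology.IsBounded D)
    (hDne : D ≠ Set.univ) (hDfc : FinitelyConnectedAtBoundary D)
    (f : X → Y) (g : Y → X) (hf : ClassF Ω D f g)
    (x : X) (hx : x ∈ frontier Ω)
    (γ : ℝ → X) (hγcont : ContinuousOn γ (Set.Icc 0 1))
    (hγΩ : γ '' Set.Ico 0 1 ⊆ Ω) (hγ1 : γ 1 = x) :
    ∃ x' ∈ frontier D,
      Filter.Tendsto (fun t => f (γ t)) (𝓝[Set.Ico 0 1] 1) (𝓝 x') := by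
  obtain ⟨⟨hfc, hgc, hfm, hgm, hgf, hfg⟩, hF⟩ := hf
  haveI := hY.1
  have hcomp : IsCompact (closure D) :=
    (doubling_totallyBounded hY.2.1 hDbdd).closure.isCompact_of_isComplete
      isClosed_closure.isComplete
  have hxΩ : x ∉ Ω := fun h => by
    rw [hΩdom.1.frontier_eq] at hx
    exact hx.2 h
  set l : Filter ℝ := 𝓝[Set.Ico 0 1] 1 with hl
  haveI : l.NeBot := right_nhdsWithin_Ico_neBot zero_lt_one
  have hmem : ∀ᶠ t in l, γ t ∈ Ω := by
    filter_upwards [self_mem_nhdsWithin] with t ht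
    exact hγΩ ⟨t, ht, rfl⟩
  have hγlim : Tendsto γ l (𝓝 x) := by
    have := (hγcont 1 (right_mem_Icc.2 zero_le_one)).mono_left
      (nhdsWithin_mono 1 Ico_subset_Icc_self)
    rwa [hγ1] at this
  have hclD : ∀ᶠ t in l, f (γ t) ∈ closure D := hmem.mono fun t ht => subset_closure (hfm ht)
  have hfr : ∀ y ∈ closure D, MapClusterPt y l (fun t => f (γ t)) → y ∈ frontier D := by
    intro y hy hcl
    rw [hDdom.1.frontier_eq]
    refine ⟨hy, fun hyD => ?_⟩
    have hne : g y ≠ x := fun h => hxΩ (h ▸ hgm hyD)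
    obtain ⟨U, V, hU, hV, hyU, hxV, hUV⟩ := t2_separation hne
    have hpre : g ⁻¹' U ∈ 𝓝 y :=
      (hgc.continuousAt (hDdom.1.mem_nhds hyD)) (hU.mem_nhds hyU)
    have h1 := mapClusterPt_iff_frequently.1 hcl _ hpre
    obtain ⟨t, ht, htΩ, htV⟩ :=
      (h1.and_eventually (hmem.and (hγlim (hV.mem_nhds hxV)))).exists
    rw [mem_preimage, hgf _ htΩ] at ht
    exact Set.disjoint_left.1 hUV ht htV
  have hcpt : ∀ y ∈ closure D, MapClusterPt y l (fun t => f (γ t)) → ∀ r > 0,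
      ∃ C : Set Y, C ⊆ D ∧ C ⊆ Metric.ball y r ∧ IsConnected C ∧
        ∀ ε > 0, ∃ z ∈ g '' C, dist z x < ε := by
    intro y hy hcl r hr
    obtain ⟨U, hU, -, hyU, hUr, hfin⟩ := hDfc y (hfr y hy hcl) r hr
    have h1 := (mapClusterPt_iff_frequently.1 hcl _ (hU.mem_nhds hyU)).and_eventually hmem
    obtain ⟨C, ⟨c, hc, rfl⟩, hfreq⟩ : ∃ C ∈ {C : Set Y | ∃ y ∈ U ∩ D, C = connectedComponentIn (U ∩ D) y},
        ∃ᶠ t in l, f (γ t) ∈ C := by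
      by_contra hcon
      push Not at hcon
      have h2 := (eventually_all_finite hfin).2 hcon
      obtain ⟨t, ⟨htU, htΩ⟩, ht⟩ := (h1.and_eventually h2).exists
      exact ht _ ⟨f (γ t), ⟨htU, hfm htΩ⟩, rfl⟩ (mem_connectedComponentIn ⟨htU, hfm htΩ⟩)
    have hsub := connectedComponentIn_subset (U ∩ D) c
    refine ⟨_, fun z hz => (hsub hz).2, fun z hz => hUr (hsub hz).1,
      isConnected_connectedComponentIn_iff.2 hc, ?_⟩
    intro ε hε
    obtain ⟨t, ht, htΩ, htb⟩ :=
      (hfreq.and_eventually (hmem.and (hγlim (Metric.ball_mem_nhds x hε)))).exists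
    exact ⟨γ t, ⟨f (γ t), ht, hgf _ htΩ⟩, htb⟩
  obtain ⟨y, hy, hcl⟩ := hcomp.exists_mapClusterPt (f := l) (u := fun t => f (γ t))
    (le_principal_iff.2 hclD)
  refine ⟨y, hfr y hy hcl, hcomp.tendsto_nhds_of_unique_mapClusterPt hclD ?_⟩
  intro y' hy' hcl'
  by_contra hne
  have hd : 0 < dist y' y := dist_pos.2 hne
  obtain ⟨A, hAD, hAb, hAc, hAx⟩ := hcpt y hy hcl (dist y' y / 4) (by positivity)
  obtain ⟨B, hBD, hBb, hBc, hBx⟩ := hcpt y' hy' hcl' (dist y' y / 4) (by positivity)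
  have hfar : ∀ a ∈ A, ∀ b ∈ B, dist y' y / 4 ≤ dist a b := by
    intro a ha b hb
    have h1 := Metric.mem_ball.1 (hAb ha)
    have h2 := Metric.mem_ball.1 (hBb hb)
    have h3 := dist_triangle4 y' b a y
    rw [dist_comm y' b, dist_comm b a] at h3
    linarith
  have hfgim : ∀ C ⊆ D, f '' (g '' C) = C := by
    intro C hC
    rw [image_image]
    exact (image_congr fun z hz => hfg z (hC hz)).trans (image_id' C)
  have hgA : g '' A ⊆ Ω := fun z ⟨a, ha, e⟩ => e ▸ hgm (hAD ha)
  have hgB : g '' B ⊆ Ω := fun z ⟨a, ha, e⟩ => e ▸ hgm (hBD ha)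
  have hdisj : Disjoint (g '' A) (g '' B) := by
    rw [Set.disjoint_left]
    rintro _ ⟨a, ha, rfl⟩ ⟨b, hb, hab⟩
    have : b = a := by rw [← hfg b (hBD hb), hab, hfg a (hAD ha)]
    have h := hfar a ha b hb
    rw [this, dist_self] at h
    linarith
  have hz := innerDiamDist_zero hX.2.2 hΩdom.1 hΩbt hgA hgB hdisj x hAx hBx
  have hAne : g '' A ≠ Ω := fun h => by
    obtain ⟨b, hb⟩ := hBc.nonempty.image g
    exact Set.disjoint_left.1 hdisj (h ▸ hgB hb) hb
  have hBne : g '' B ≠ Ω := fun h => by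
    obtain ⟨b, hb⟩ := hAc.nonempty.image g
    exact Set.disjoint_left.1 hdisj hb (h ▸ hgA hb)
  have := (hF (g '' A) (g '' B) hgA hAne (hAc.image g (hgc.mono hAD)) hgB hBne
    (hBc.image g (hgc.mono hBD))).1 hz
  rw [hfgim A hAD, hfgim B hBD] at this
  exact innerDiamDist_pos (by positivity) hfar this
end
end

section
/- Let X and Y be metric spaces satisfying assumptions (A), and let Ω ⊊ X and Ω' ⊊ Y be bounded domains, each of which is linearly connected (i.e., there is L' ≥ 1 such that any two points of the domain lie in a continuum contained in the domain of diameter at most L' times their distance). If f : Ω → Ω' is a surjective L-bi-Lipschitz homeomorphism, i.e. (1/L)·d_X(x,y) ≤ d_Y(f(x),f(y)) ≤ L·d_X(x,y) for all x,y ∈ Ω, then f belongs to the class F(Ω, Ω'). -/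
open Set Metric Filter Bornology
open scoped ENNReal Topology

noncomputable section

theorem innerDiamDist_zero_of_lip {X Y : Type*} [MetricSpace X] [MetricSpace Y]
    {Ω : Set X} {Ω' : Set Y} {f : X → Y} {K : NNReal} (hf : LipschitzOnWith K f Ω)
    (hm : Set.MapsTo f Ω Ω') {E F : Set X} (h : innerDiamDist Ω E F = 0) :
    innerDiamDist Ω' (f '' E) (f '' F) = 0 := by
  have key : innerDiamDist Ω' (f '' E) (f '' F) / (K : ℝ≥0∞) ≤ innerDiamDist Ω E F := by
    refine le_iInf₂ fun γ hγ => ?_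
    obtain ⟨hc, hsub, hv, h0, h1⟩ := hγ
    have hmt : Set.MapsTo γ (Set.Icc 0 1) Ω := fun t ht => hsub ⟨t, ht, rfl⟩
    refine ENNReal.div_le_of_le_mul' ?_
    refine (iInf₂_le (f ∘ γ) ⟨hf.continuousOn.comp hc hmt, ?_, ?_, ⟨_, h0, rfl⟩,
      ⟨_, h1, rfl⟩⟩).trans ?_
    rotate_left
    · rintro _ ⟨t, ht, rfl⟩
      exact hm (hmt ht)
    · exact (hf.comp_eVariationOn_le hmt).trans_lt (ENNReal.mul_lt_top ENNReal.coe_lt_top hv)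
    · refine Metric.ediam_image_le_iff.2 fun s hs t ht => ?_
      refine (hf (hmt hs) (hmt ht)).trans ?_
      gcongr
      exact Metric.edist_le_ediam_of_mem ⟨s, hs, rfl⟩ ⟨t, ht, rfl⟩
  rw [h, nonpos_iff_eq_zero, ENNReal.div_eq_zero_iff] at key
  exact key.resolve_right ENNReal.coe_ne_top

/-- a surjective `L`-bi-Lipschitz homeomorphism between bounded linearly
connected domains belongs to the class `F(Ω, Ω')`. -/
theorem statement_12 {X Y : Type*} [MetricSpace X] [MetricSpace Y]
    (hX : AssumptionsA X) (hY : AssumptionsA Y)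
    (Ω : Set X) (hΩdom : IsDomainIn Ω) (hΩbdd : Bornology.IsBounded Ω)
    (hΩne : Ω ≠ Set.univ) (hΩlin : BoundedTurning Ω)
    (Ω' : Set Y) (hΩ'dom : IsDomainIn Ω') (hΩ'bdd : Bornology.IsBounded Ω')
    (hΩ'ne : Ω' ≠ Set.univ) (hΩ'lin : BoundedTurning Ω')
    (f : X → Y) (L : ℝ) (hL : 1 ≤ L)
    (hmaps : Set.MapsTo f Ω Ω') (hsurj : Set.SurjOn f Ω Ω')
    (hbilip : ∀ x ∈ Ω, ∀ y ∈ Ω,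
      (1 / L) * dist x y ≤ dist (f x) (f y) ∧ dist (f x) (f y) ≤ L * dist x y) :
    ∃ g : Y → X, ClassF Ω Ω' f g := by
  have hL0 : 0 < L := lt_of_lt_of_le one_pos hL
  obtain ⟨x₀, -⟩ := hΩdom.2.nonempty
  haveI : Nonempty X := ⟨x₀⟩
  set g := Function.invFunOn f Ω with hg
  have gm : Set.MapsTo g Ω' Ω := fun y hy => Function.invFunOn_mem (hsurj hy)
  have fg : ∀ y ∈ Ω', f (g y) = y := fun y hy => Function.invFunOn_eq (hsurj hy)
  have lower : ∀ x ∈ Ω, ∀ y ∈ Ω, dist x y ≤ L * dist (f x) (f y) := by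
    intro x hx y hy
    have h := (hbilip x hx y hy).1
    rwa [one_div, inv_mul_le_iff₀ hL0] at h
  have gf : ∀ x ∈ Ω, g (f x) = x := by
    intro x hx
    have h := lower _ (gm (hmaps hx)) x hx
    rw [fg _ (hmaps hx), dist_self, mul_zero] at h
    exact dist_le_zero.1 h
  have lf : LipschitzOnWith ⟨L, hL0.le⟩ f Ω :=
    LipschitzOnWith.of_dist_le_mul fun x hx y hy => (hbilip x hx y hy).2
  have lg : LipschitzOnWith ⟨L, hL0.le⟩ g Ω' :=
    LipschitzOnWith.of_dist_le_mul fun x hx y hy => by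
      have h := lower _ (gm hx) _ (gm hy)
      rwa [fg x hx, fg y hy] at h
  have im : ∀ E : Set X, E ⊆ Ω → g '' (f '' E) = E := by
    intro E hE
    rw [Set.image_image]
    exact (Set.image_congr fun x hx => gf x (hE hx)).trans (Set.image_id' E)
  refine ⟨g, ⟨lf.continuousOn, lg.continuousOn, hmaps, gm, gf, fg⟩, ?_⟩
  intro E F hE _ _ hF _ _
  refine ⟨fun h => innerDiamDist_zero_of_lip lf hmaps h, fun h => ?_⟩
  have := innerDiamDist_zero_of_lip lg gm h
  rwa [im E hE, im F hF] at this
end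
end

section
/- Let X be a metric space satisfying assumptions (A), and let Ω, Ω' ⊊ X be bounded domains that are locally connected at the boundary. If f : Ω → Ω' is a surjective η-quasisymmetric homeomorphism, then f belongs to the class F(Ω, Ω'). -/
open Set Metric Filter Bornology
open scoped ENNReal Topology

noncomputable section

def RectJoin {X : Type*} [MetricSpace X] (V : Set X) (x y : X) : Prop :=
  ∃ γ : ℝ → X, ContinuousOn γ (Set.Icc 0 1) ∧ γ '' Set.Icc 0 1 ⊆ V ∧
      eVariationOn γ (Set.Icc 0 1) < ⊤ ∧ γ 0 = x ∧ γ 1 = y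

theorem RectJoin.mono {X : Type*} [MetricSpace X] {V W : Set X} (h : V ⊆ W) {x y : X}
    (hj : RectJoin V x y) : RectJoin W x y := by
  obtain ⟨γ, h1, h2, h3⟩ := hj
  exact ⟨γ, h1, h2.trans h, h3⟩

theorem RectJoin.trans' {X : Type*} [MetricSpace X] {V : Set X} {x y z : X}
    (h1 : RectJoin V x y) (h2 : RectJoin V y z) : RectJoin V x z := by
  obtain ⟨γ, c1, s1, v1, a1, b1⟩ := h1
  obtain ⟨δ, c2, s2, v2, a2, b2⟩ := h2
  let ζ : ℝ → X := fun t => if t ≤ 1/2 then γ (2 * t) else δ (2 * t - 1)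
  have hL : EqOn ζ (γ ∘ fun t => 2 * t) (Icc 0 (1/2)) := by
    intro t ht
    simp only [ζ, Function.comp]
    rw [if_pos ht.2]
  have hR : EqOn ζ (δ ∘ fun t => 2 * t - 1) (Icc (1/2) 1) := by
    intro t ht
    simp only [ζ, Function.comp]
    split_ifs with h
    · have : t = 1/2 := le_antisymm h ht.1
      subst this
      norm_num
      rw [b1, a2]
    · rfl
  have mL : MapsTo (fun t : ℝ => 2 * t) (Icc 0 (1/2)) (Icc 0 1) := by
    intro t ht; constructor <;> [have := ht.1; have := ht.2] <;> simp only <;> linarith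
  have mR : MapsTo (fun t : ℝ => 2 * t - 1) (Icc (1/2) 1) (Icc 0 1) := by
    intro t ht; constructor <;> [have := ht.1; have := ht.2] <;> simp only <;> linarith
  have hU : Icc (0:ℝ) (1/2) ∪ Icc (1/2) 1 = Icc 0 1 :=
    Icc_union_Icc_eq_Icc (by norm_num) (by norm_num)
  have cL : ContinuousOn ζ (Icc 0 (1/2)) :=
    (c1.comp (by fun_prop) mL).congr hL
  have cR : ContinuousOn ζ (Icc (1/2) 1) :=
    (c2.comp (by fun_prop) mR).congr hR
  refine ⟨ζ, ?_, ?_, ?_, ?_, ?_⟩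
  · rw [← hU]
    exact cL.union_of_isClosed cR isClosed_Icc isClosed_Icc
  · rw [← hU, image_union]
    apply union_subset
    · rintro _ ⟨t, ht, rfl⟩
      rw [hL ht]
      exact s1 ⟨_, mL ht, rfl⟩
    · rintro _ ⟨t, ht, rfl⟩
      rw [hR ht]
      exact s2 ⟨_, mR ht, rfl⟩
  · have := eVariationOn.Icc_add_Icc ζ (s := univ) (a := 0) (b := 1/2) (c := 1)
      (by norm_num) (by norm_num) (mem_univ _)
    simp only [univ_inter] at this
    rw [← this, eVariationOn.congr hL, eVariationOn.congr hR]
    apply ENNReal.add_lt_top.2 ⟨_, _⟩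
    · exact (eVariationOn.comp_le_of_monotoneOn γ _
        (fun a _ b _ h => by linarith) mL).trans_lt v1
    · exact (eVariationOn.comp_le_of_monotoneOn δ _
        (fun a _ b _ h => by linarith) mR).trans_lt v2
  · simp only [ζ]; norm_num; exact a1
  · simp only [ζ]; norm_num; exact b2

theorem quasi_local {X : Type*} [MetricSpace X] (hq : QuasiconvexSpace X) :
    ∃ C : ℝ, 1 ≤ C ∧ ∀ x y : X, RectJoin (closedBall x (C * dist x y)) x y := by
  obtain ⟨C, hC, h⟩ := hq
  refine ⟨C, hC, fun x y => ?_⟩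
  obtain ⟨γ, c, h0, h1, hv⟩ := h x y
  refine ⟨γ, c, ?_, hv.trans_lt ENNReal.ofReal_lt_top, h0, h1⟩
  rintro _ ⟨t, ht, rfl⟩
  have := (eVariationOn.edist_le γ ht (left_mem_Icc.2 zero_le_one)).trans hv
  rw [h0, edist_dist, ENNReal.ofReal_le_ofReal_iff (by positivity)] at this
  exact this

theorem open_conn_join {X : Type*} [MetricSpace X] (hq : QuasiconvexSpace X) {V : Set X}
    (ho : IsOpen V) (hc : IsPreconnected V) {x y : X} (hx : x ∈ V) (hy : y ∈ V) :
    RectJoin V x y := by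
  obtain ⟨C, hC, h⟩ := quasi_local hq
  refine hc.induction₂' (fun x y => RectJoin V x y) ?_ ?_ hx hy
  · intro z hz
    obtain ⟨r, hr, hb⟩ := Metric.isOpen_iff.1 ho z hz
    have : ball z (r / (2 * C)) ∈ 𝓝 z := ball_mem_nhds _ (by positivity)
    filter_upwards [mem_nhdsWithin_of_mem_nhds this] with w hw
    have hw' : dist w z * (2 * C) < r := (lt_div_iff₀ (by positivity)).1 hw
    have hd : 0 ≤ dist w z := dist_nonneg
    have h2 : dist w z ≤ C * dist w z := by nlinarith
    constructor
    · refine (h z w).mono (fun u hu => hb ?_)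
      rw [mem_closedBall, dist_comm z w] at hu
      rw [mem_ball]; nlinarith
    · refine (h w z).mono (fun u hu => hb ?_)
      rw [mem_closedBall] at hu
      rw [mem_ball]
      have := dist_triangle u w z
      nlinarith
  · intro x y z _ _ _ h1 h2
    exact h1.trans' h2

theorem doubling_tb {X : Type*} [MetricSpace X] (hd : DoublingSpace X) {S : Set X}
    (hS : Bornology.IsBounded S) : TotallyBounded S := by
  obtain ⟨N, hN⟩ := hd
  have key : ∀ (n : ℕ) (x : X) (r : ℝ), ∃ t : Set X, t.Finite ∧
      ball x r ⊆ ⋃ y ∈ t, ball y (r / 2 ^ n) := by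
    intro n
    induction n with
    | zero => intro x r; exact ⟨{x}, finite_singleton x, by simp⟩
    | succ n ih =>
      intro x r
      obtain ⟨t, -, ht⟩ := hN x r
      choose u hu hu' using fun y => ih y (r / 2)
      refine ⟨⋃ y ∈ (t : Set X), u y, t.finite_toSet.biUnion (fun y _ => hu y), ?_⟩
      intro w hw
      obtain ⟨y, hy, hwy⟩ := mem_iUnion₂.1 (ht hw)
      obtain ⟨v, hv, hwv⟩ := mem_iUnion₂.1 (hu' y hwy)
      refine mem_iUnion₂.2 ⟨v, mem_iUnion₂.2 ⟨y, hy, hv⟩, ?_⟩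
      rwa [pow_succ', ← div_div]
  rw [Metric.totallyBounded_iff]
  intro ε hε
  rcases S.eq_empty_or_nonempty with rfl | ⟨x, _⟩
  · exact ⟨∅, finite_empty, by simp⟩
  obtain ⟨r, hr⟩ := hS.subset_ball x
  obtain ⟨n, hn⟩ : ∃ n : ℕ, r / 2 ^ n < ε := by
    obtain ⟨n, hn⟩ := pow_unbounded_of_one_lt (r / ε) (one_lt_two : (1:ℝ) < 2)
    refine ⟨n, ?_⟩
    rw [div_lt_iff₀ (by positivity)]
    rw [div_lt_iff₀ hε] at hn
    linarith
  obtain ⟨t, ht, h⟩ := key n x r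
  exact ⟨t, ht, (hr.trans h).trans (iUnion₂_mono fun y _ => ball_subset_ball hn.le)⟩

theorem inner_zero_iff {X : Type*} [MetricSpace X] (hX : AssumptionsA X)
    {Ω : Set X} (ho : IsOpen Ω) (hb : Bornology.IsBounded Ω)
    (hlc : LocallyConnectedAtBoundary Ω) {E F : Set X} (hE : E ⊆ Ω) (hF : F ⊆ Ω) :
    innerDiamDist Ω E F = 0 ↔ ∀ δ > 0, ∃ x ∈ E, ∃ y ∈ F, dist x y < δ := by
  obtain ⟨hcomp, hd, hq⟩ := hX
  constructor
  · intro h δ hδ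
    have h' : innerDiamDist Ω E F < ENNReal.ofReal δ := by
      rw [h]; exact ENNReal.ofReal_pos.2 hδ
    unfold innerDiamDist at h'
    simp only [iInf_lt_iff] at h'
    obtain ⟨γ, ⟨-, -, -, h0, h1⟩, hγ⟩ := h'
    refine ⟨_, h0, _, h1, ?_⟩
    have := (Metric.edist_le_ediam_of_mem (s := γ '' Icc 0 1) ⟨0, by simp, rfl⟩
      ⟨1, by simp, rfl⟩).trans_lt hγ
    rw [edist_dist] at this
    exact (ENNReal.ofReal_lt_ofReal_iff hδ).1 this
  · intro h
    have hK : IsCompact (closure Ω) :=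
      isCompact_iff_totallyBounded_isComplete.2
        ⟨(doubling_tb hd hb).closure, isClosed_closure.isComplete⟩
    choose x hx y hy hxy using fun n : ℕ => h (1 / ((n:ℝ) + 1)) (by positivity)
    obtain ⟨p, hp, φ, hφ, hlim⟩ := hK.tendsto_subseq (fun n => subset_closure (hE (hx n)))
    have hdist : Tendsto (fun n => dist (x (φ n)) (y (φ n))) atTop (𝓝 0) :=
      squeeze_zero (fun _ => dist_nonneg) (fun n => (hxy (φ n)).le)
        (tendsto_one_div_add_atTop_nhds_zero_nat.comp hφ.tendsto_atTop)
    have hlimy : Tendsto (y ∘ φ) atTop (𝓝 p) := (tendsto_iff_of_dist hdist).1 hlim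
    have main : ∀ r > 0, ∃ n, RectJoin (Ω ∩ ball p r) (x n) (y n) := by
      intro r hr
      by_cases hpΩ : p ∈ Ω
      · obtain ⟨C, hC, hj⟩ := quasi_local hq
        obtain ⟨s, hs, hsb⟩ := Metric.isOpen_iff.1 (ho.inter isOpen_ball) p
          (⟨hpΩ, mem_ball_self hr⟩ : p ∈ Ω ∩ ball p r)
        have e1 := hlim.eventually_mem (ball_mem_nhds p (half_pos hs))
        have e2 := hdist.eventually_mem (Iio_mem_nhds (show 0 < s / (2 * C) by positivity))
        obtain ⟨n, h1, h2⟩ := (e1.and e2).exists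
        refine ⟨φ n, (hj _ _).mono (fun u hu => hsb ?_)⟩
        have h2' : dist (x (φ n)) (y (φ n)) * (2 * C) < s := (lt_div_iff₀ (by positivity)).1 h2
        have h1' : dist (x (φ n)) p < s / 2 := h1
        rw [mem_closedBall] at hu
        rw [mem_ball]
        have := dist_triangle u (x (φ n)) p
        nlinarith
      · have hpf : p ∈ frontier Ω := by
          rw [ho.frontier_eq]; exact ⟨hp, hpΩ⟩
        obtain ⟨U, hUo, -, hpU, hUb, hUc⟩ := hlc p hpf r hr
        have e1 := hlim.eventually_mem (hUo.mem_nhds hpU)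
        have e2 := hlimy.eventually_mem (hUo.mem_nhds hpU)
        obtain ⟨n, h1, h2⟩ := (e1.and e2).exists
        refine ⟨φ n, (open_conn_join hq (hUo.inter ho) hUc.isPreconnected
          ⟨h1, hE (hx _)⟩ ⟨h2, hF (hy _)⟩).mono ?_⟩
        exact fun u hu => ⟨hu.2, hUb hu.1⟩
    refine le_antisymm (ENNReal.le_of_forall_pos_le_add ?_) zero_le
    intro ε hε _
    obtain ⟨n, γ, c, s, v, h0, h1⟩ := main (ε / 2) (by positivity)
    rw [zero_add]
    refine (iInf₂_le γ ⟨c, s.trans inter_subset_left, v, h0 ▸ hx n, h1 ▸ hy n⟩).trans ?_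
    refine Metric.ediam_le fun a ha b hb => ?_
    have ha' : dist a p < ε / 2 := (s ha).2
    have hb' : dist b p < ε / 2 := (s hb).2
    have := dist_triangle_right a b p
    rw [edist_dist]
    refine ENNReal.ofReal_le_of_le_toReal ?_
    simp only [ENNReal.coe_toReal]
    linarith

/-- a surjective `η`-quasisymmetric homeomorphism between bounded domains
locally connected at the boundary belongs to the class `F(Ω, Ω')`. -/
theorem statement_13 {X : Type*} [MetricSpace X] (hX : AssumptionsA X)
    (Ω : Set X) (hΩdom : IsDomainIn Ω) (hΩbdd : Bornology.IsBounded Ω)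
    (hΩne : Ω ≠ Set.univ) (hΩlc : LocallyConnectedAtBoundary Ω)
    (Ω' : Set X) (hΩ'dom : IsDomainIn Ω') (hΩ'bdd : Bornology.IsBounded Ω')
    (hΩ'ne : Ω' ≠ Set.univ) (hΩ'lc : LocallyConnectedAtBoundary Ω')
    (f : X → X) (g : X → X) (hfg : IsHomeoBetween f g Ω Ω')
    (η : ℝ → ℝ) (hηcont : ContinuousOn η (Set.Ici 0)) (hη0 : η 0 = 0)
    (hηmono : StrictMonoOn η (Set.Ici 0)) (hηsurj : Set.SurjOn η (Set.Ici 0) (Set.Ici 0))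
    (hqs : ∀ a ∈ Ω, ∀ b ∈ Ω, ∀ x ∈ Ω, a ≠ b → x ≠ a → x ≠ b →
      dist (f x) (f a) / dist (f x) (f b) ≤ η (dist x a / dist x b)) :
    ClassF Ω Ω' f g := by
  refine ⟨hfg, fun E F hE hEne hEc hF hFne hFc => ?_⟩
  obtain ⟨hfc, hgc, hfm, hgm, hgf, hfg'⟩ := hfg
  have hfE : f '' E ⊆ Ω' := fun _ ⟨e, he, h⟩ => h ▸ hfm (hE he)
  have hfF : f '' F ⊆ Ω' := fun _ ⟨e, he, h⟩ => h ▸ hfm (hF he)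
  rw [inner_zero_iff hX hΩdom.1 hΩbdd hΩlc hE hF,
    inner_zero_iff hX hΩ'dom.1 hΩ'bdd hΩ'lc hfE hfF]
  obtain ⟨p, hp⟩ := hEc.nonempty
  obtain ⟨q, hq, hqE⟩ : ∃ q ∈ Ω, q ∉ E := by
    by_contra! hcon
    exact hEne (hE.antisymm hcon)
  have hpq : p ≠ q := fun h => hqE (h ▸ hp)
  replace hp := hE hp
  have hinj : ∀ x ∈ Ω, ∀ y ∈ Ω, x ≠ y → f x ≠ f y := fun x hx y hy hxy h =>
    hxy (by rw [← hgf x hx, ← hgf y hy, h])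
  have far : ∀ (u v z : X), u ≠ v → dist u v / 2 ≤ dist z u ∨ dist u v / 2 ≤ dist z v := by
    intro u v z _
    by_contra! hcon
    have := dist_triangle_left u v z
    linarith
  obtain ⟨D, hD⟩ := Metric.isBounded_iff.1 hΩbdd
  obtain ⟨D', hD'⟩ := Metric.isBounded_iff.1 hΩ'bdd
  have hDpos : 0 < D := (dist_pos.2 hpq).trans_le (hD hp hq)
  have hD'pos : 0 < D' := (dist_pos.2 (hinj p hp q hq hpq)).trans_le (hD' (hfm hp) (hfm hq))
  have hηnn : ∀ t, 0 ≤ t → 0 ≤ η t := fun t ht => by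
    rw [← hη0]; exact hηmono.monotoneOn (mem_Ici.2 le_rfl) ht ht
  constructor
  · intro h ε hε
    have hc : 0 < dist p q / 2 := half_pos (dist_pos.2 hpq)
    set c := dist p q / 2
    obtain ⟨s, hs0, hs⟩ := hηsurj (show ε / (2 * D') ∈ Ici 0 from mem_Ici.2 (by positivity))
    rw [mem_Ici] at hs0
    have hspos : 0 < s := by
      rcases hs0.eq_or_lt with h0 | h0
      · rw [← h0, hη0] at hs
        have : 0 < ε / (2 * D') := by positivity
        linarith
      · exact h0
    obtain ⟨x, hx, a, ha, hxa⟩ := h (min c (s * c)) (by positivity)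
    refine ⟨f x, ⟨x, hx, rfl⟩, f a, ⟨a, ha, rfl⟩, ?_⟩
    replace hx := hE hx
    replace ha := hF ha
    by_cases hne : x = a
    · rw [hne, dist_self]; exact hε
    obtain ⟨b, hb, hxb⟩ : ∃ b ∈ Ω, c ≤ dist x b := by
      rcases far p q x hpq with h | h
      exacts [⟨p, hp, h⟩, ⟨q, hq, h⟩]
    have hxb0 : 0 < dist x b := hc.trans_le hxb
    have hxb' : x ≠ b := dist_pos.1 hxb0
    have hab : a ≠ b := by
      rintro rfl
      have := hxa.trans_le (min_le_left _ _)
      linarith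
    have h1 := hqs a ha b hb x hx hab hne hxb'
    have h2 : η (dist x a / dist x b) ≤ η s := by
      apply hηmono.monotoneOn (mem_Ici.2 (by positivity)) hs0
      rw [div_le_iff₀ hxb0]
      have := hxa.trans_le (min_le_right _ _)
      nlinarith
    have h3 : 0 < dist (f x) (f b) := dist_pos.2 (hinj x hx b hb hxb')
    have h4 := (div_le_iff₀ h3).1 (h1.trans (h2.trans hs.le))
    have h5 := hD' (hfm hx) (hfm hb)
    calc dist (f x) (f a) ≤ ε / (2 * D') * dist (f x) (f b) := h4
      _ ≤ ε / (2 * D') * D' := by gcongr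
      _ = ε / 2 := by field_simp
      _ < ε := half_lt_self hε
  · intro h ε hε
    have hpq' := hinj p hp q hq hpq
    have hc : 0 < dist (f p) (f q) / 2 := half_pos (dist_pos.2 hpq')
    set c := dist (f p) (f q) / 2
    have hη1 := hηnn (D / ε) (by positivity)
    obtain ⟨_, ⟨x, hx, rfl⟩, _, ⟨a, ha, rfl⟩, hxa⟩ := h (c / (η (D / ε) + 1)) (by positivity)
    refine ⟨x, hx, a, ha, ?_⟩
    replace hx := hE hx
    replace ha := hF ha
    by_contra! hcon
    have hxa0 : 0 < dist x a := hε.trans_le hcon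
    have hne : x ≠ a := dist_pos.1 hxa0
    obtain ⟨b, hb, hxb⟩ : ∃ b ∈ Ω, c ≤ dist (f x) (f b) := by
      rcases far (f p) (f q) (f x) hpq' with h | h
      exacts [⟨p, hp, h⟩, ⟨q, hq, h⟩]
    have hxb' : x ≠ b := by
      rintro rfl
      rw [dist_self] at hxb; linarith
    rw [lt_div_iff₀ (by positivity)] at hxa
    have hda : 0 < dist (f x) (f a) := dist_pos.2 (hinj x hx a ha hne)
    have hba : b ≠ a := by
      rintro rfl
      nlinarith
    have h1 := hqs b hb a ha x hx hba hxb' hne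
    have h2 : η (dist x b / dist x a) ≤ η (D / ε) := by
      apply hηmono.monotoneOn (mem_Ici.2 (by positivity)) (mem_Ici.2 (by positivity))
      have := hD hx hb
      gcongr
    have h4 := (div_le_iff₀ hda).1 (h1.trans h2)
    nlinarith
end
end

section
/- Let Ω be a bounded domain in a metric space X and let E_{k+1} ⊆ E_k ⊊ Ω be nonempty sets with dist_M(Ω ∩ ∂E_{k+1}, Ω ∩ ∂E_k) > 0, where dist_M denotes the Mazurkiewicz distance in Ω. Then E_{k+1} is contained in the interior of E_k; in particular, the interior of E_k is nonempty. -/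
open Set Metric Filter Bornology
open scoped ENNReal Topology

noncomputable section

/-- if `A ⊆ B ⊊ Ω` are nonempty and the Mazurkiewicz distance between
`Ω ∩ ∂A` and `Ω ∩ ∂B` is positive, then `A` is contained in the interior of `B`;
in particular the interior of `B` is nonempty. -/
theorem statement_15 {X : Type*} [MetricSpace X]
    (Ω : Set X) (hΩdom : IsDomainIn Ω) (hΩbdd : Bornology.IsBounded Ω)
    (A B : Set X) (hAne : A.Nonempty) (hBne : B.Nonempty)
    (hAB : A ⊆ B) (hBΩ : B ⊆ Ω) (hBprop : B ≠ Ω)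
    (hpos : 0 < mazDist Ω (Ω ∩ frontier A) (Ω ∩ frontier B)) :
    A ⊆ interior B ∧ (interior B).Nonempty := by
  have h : A ⊆ interior B := by
    intro x hx
    by_contra hn
    have hxB : x ∈ frontier B := ⟨subset_closure (hAB hx), hn⟩
    have hxA : x ∈ frontier A := ⟨subset_closure hx, fun h => hn (interior_mono hAB h)⟩
    have hxΩ : x ∈ Ω := hBΩ (hAB hx)
    have hle : mazDist Ω (Ω ∩ frontier A) (Ω ∩ frontier B) ≤ EMetric.diam ({x} : Set X) :=
      iInf₂_le ({x} : Set X) ⟨singleton_subset_iff.2 hxΩ, isConnected_singleton,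
        ⟨x, rfl, hxΩ, hxA⟩, ⟨x, rfl, hxΩ, hxB⟩⟩
    have h0 : EMetric.diam ({x} : Set X) = 0 := Metric.ediam_singleton
    rw [h0] at hle
    exact absurd hpos (not_lt.2 hle)
  exact ⟨h, hAne.mono h⟩
end
end

section
/- Let X and Y be complete metric spaces with X proper (every closed bounded subset of X is compact), let Ω ⊊ X and D ⊊ Y be bounded domains, and let f : Ω → D be a homeomorphism. If F is an acceptable set in D, then f⁻¹(F) is an acceptable set in Ω. -/
open Set Metric Filter Bornology
open scoped ENNReal Topology

noncomputable section

/-- the preimage under a homeomorphism `f : Ω → D` of an acceptable set in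
`D` is an acceptable set in `Ω` (with `X` complete and proper, `Y` complete). -/
theorem statement_17 {X Y : Type*} [MetricSpace X] [MetricSpace Y]
    [CompleteSpace X] [ProperSpace X] [CompleteSpace Y]
    (Ω : Set X) (hΩdom : IsDomainIn Ω) (hΩbdd : Bornology.IsBounded Ω)
    (hΩne : Ω ≠ Set.univ)
    (D : Set Y) (hDdom : IsDomainIn D) (hDbdd : Bornology.IsBounded D)
    (hDne : D ≠ Set.univ)
    (f : X → Y) (g : Y → X) (hfg : IsHomeoBetween f g Ω D)
    (F : Set Y) (hF : AcceptableIn D F) :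
    AcceptableIn Ω (g '' F) := by
  obtain ⟨hfc, hgc, hfm, hgm, hgf, hfg'⟩ := hfg
  obtain ⟨_, hFc, hFD, hFne, y, hyF, hyD⟩ := hF
  have hsub : g '' F ⊆ Ω := by
    rintro _ ⟨z, hz, rfl⟩
    exact hgm (hFD hz)
  refine ⟨hΩbdd.subset hsub, hFc.image g (hgc.mono hFD), hsub, ?_, ?_⟩
  · intro h
    apply hFne
    refine Subset.antisymm hFD fun z hz => ?_
    have h1 : g z ∈ g '' F := h ▸ hgm hz
    obtain ⟨w, hw, hwz⟩ := h1
    have h2 : w = z := by rw [← hfg' w (hFD hw), hwz, hfg' z hz]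
    exact h2 ▸ hw
  · by_contra hne
    have hK : closure (g '' F) ⊆ Ω := by
      intro x hx
      by_contra hxΩ
      apply hne
      refine ⟨x, hx, ?_⟩
      rw [hΩdom.1.frontier_eq]
      exact ⟨closure_mono hsub hx, hxΩ⟩
    have hcomp : IsCompact (closure (g '' F)) := (hΩbdd.subset hsub).isCompact_closure
    have himg : IsCompact (f '' closure (g '' F)) := hcomp.image_of_continuousOn (hfc.mono hK)
    have hFsub : F ⊆ f '' closure (g '' F) := fun z hz =>
      ⟨g z, subset_closure ⟨z, hz, rfl⟩, hfg' z (hFD hz)⟩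
    obtain ⟨x, hx, hxy⟩ := closure_minimal hFsub himg.isClosed hyF
    rw [hDdom.1.frontier_eq] at hyD
    exact hyD.2 (hxy ▸ hfm (hK hx))
end
end
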